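/- arXiv:1001.3929 — 5 statements merged into one kernel-verified Lean document; each statement's English description precedes it below -/
import Mathlib

section
/- Let I be a finite set with |I| = n ≥ 3. In ℝ^I with standard basis (e_i)_{i∈I}, set h = −∑_{i∈I} e_i and f_i = h + e_i for each i ∈ I. Let I₁, I₂ ⊆ I with I₁ ∪ I₂ ≠ I. Then the dimension of the linear span of the family {e_i : i ∈ I₁} ∪ {f_i : i ∈ I₂} equals |I₁ ∪ I₂| if I₁ ∩ I₂ = ∅, and equals |I₁ ∪ I₂| + 1 if I₁ ∩ I₂ ≠ ∅. In particular, this family is linearly independent if and only if |I₁ ∩ I₂| ≤ 1. -/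
open scoped BigOperators

/-- Lemme `lm:calc:rg`: rank of the family `{e_i : i ∈ I₁} ∪ {f_i : i ∈ I₂}`
where `f_i = h + e_i`, `h = -∑ e_i`, and `I₁ ∪ I₂ ≠ I`. -/
theorem stmt_4 {I : Type*} [Fintype I] [DecidableEq I] (hn : 3 ≤ Fintype.card I)
    (e : I → (I → ℝ)) (he : ∀ i, e i = Pi.single i 1)
    (h : I → ℝ) (hh : h = -∑ i, e i)
    (f : I → (I → ℝ)) (hf : ∀ i, f i = h + e i)
    (I₁ I₂ : Finset I) (hI : I₁ ∪ I₂ ≠ Finset.univ) :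
    (Module.finrank ℝ (Submodule.span ℝ ((e '' ↑I₁) ∪ (f '' ↑I₂))) =
      if I₁ ∩ I₂ = ∅ then (I₁ ∪ I₂).card else (I₁ ∪ I₂).card + 1) ∧
    (LinearIndependent ℝ (Sum.elim (fun i : ↥I₁ => e i) (fun j : ↥I₂ => f j)) ↔
      (I₁ ∩ I₂).card ≤ 1) := by
  obtain ⟨k, hk⟩ : ∃ k, k ∉ I₁ ∪ I₂ := by
    by_contra! H
    exact hI (Finset.eq_univ_iff_forall.2 H)
  have hc : ∀ j, h j = -1 := by
    intro j
    simp [hh, he, Finset.sum_apply, Pi.single_apply]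
  -- general independence
  have key : ∀ (a : I → ℝ) (c : ℝ), (∑ i ∈ I₁ ∪ I₂, a i • e i) + c • h = 0 →
      c = 0 ∧ ∀ i ∈ I₁ ∪ I₂, a i = 0 := by
    intro a c H
    have H2 : ∀ j, (if j ∈ I₁ ∪ I₂ then a j else 0) - c = 0 := by
      intro j
      have := congrFun H j
      simp only [Pi.add_apply, Finset.sum_apply, Pi.smul_apply, hc, he, Pi.single_apply,
        smul_eq_mul, mul_ite, mul_one, mul_zero, Pi.zero_apply, Finset.sum_ite_eq] at this
      linarith
    have hc0 : c = 0 := by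
      have := H2 k
      rw [if_neg hk] at this
      linarith
    refine ⟨hc0, fun i hi => ?_⟩
    have := H2 i
    rw [if_pos hi] at this
    linarith
  have part1 : Module.finrank ℝ (Submodule.span ℝ ((e '' ↑I₁) ∪ (f '' ↑I₂))) =
      if I₁ ∩ I₂ = ∅ then (I₁ ∪ I₂).card else (I₁ ∪ I₂).card + 1 := by
    split_ifs with hd
    · have hdis : ∀ i, i ∈ I₁ → i ∉ I₂ := fun i h1 h2 => by
        have : i ∈ I₁ ∩ I₂ := Finset.mem_inter.2 ⟨h1, h2⟩
        simp [hd] at this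
      let g : I → (I → ℝ) := fun i => if i ∈ I₁ then e i else f i
      have hr : (e '' ↑I₁) ∪ (f '' ↑I₂) = Set.range (fun i : ↥(I₁ ∪ I₂) => g i) := by
        ext v
        constructor
        · rintro (⟨i, hi, rfl⟩ | ⟨i, hi, rfl⟩)
          · have hi' : i ∈ I₁ := hi
            exact ⟨⟨i, Finset.mem_union_left _ hi⟩, by simp [g, hi']⟩
          · have hi' : i ∉ I₁ := fun h1 => hdis i h1 hi
            exact ⟨⟨i, Finset.mem_union_right _ hi⟩, by simp [g, hi']⟩
        · rintro ⟨⟨i, hi⟩, rfl⟩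
          by_cases h1 : i ∈ I₁
          · left; exact ⟨i, h1, by simp [g, h1]⟩
          · right
            exact ⟨i, (Finset.mem_union.1 hi).resolve_left h1, by simp [g, h1]⟩
      have hl : LinearIndepOn ℝ g (↑(I₁ ∪ I₂) : Set I) := by
        rw [linearIndepOn_finset_iff]
        intro a ha
        refine (key a (∑ i ∈ I₁ ∪ I₂, if i ∈ I₁ then 0 else a i) ?_).2
        rw [← ha, Finset.sum_smul, ← Finset.sum_add_distrib]
        refine Finset.sum_congr rfl fun i _ => ?_
        by_cases h1 : i ∈ I₁
        · simp [g, h1]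
        · simp [g, h1, hf, add_comm]
      rw [hr]
      have := finrank_span_eq_card (R := ℝ) (b := fun i : ↥(I₁ ∪ I₂) => g i) hl
      rw [this, Fintype.card_coe]
    · obtain ⟨p, hp⟩ := Finset.nonempty_iff_ne_empty.2 hd
      obtain ⟨hp1, hp2⟩ := Finset.mem_inter.1 hp
      let g : Option ↥(I₁ ∪ I₂) → (I → ℝ) := fun o => o.elim h (fun i => e i)
      have hr : Submodule.span ℝ ((e '' ↑I₁) ∪ (f '' ↑I₂)) = Submodule.span ℝ (Set.range g) := by
        apply le_antisymm
        · rw [Submodule.span_le]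
          have hn : h ∈ Submodule.span ℝ (Set.range g) := Submodule.subset_span ⟨none, rfl⟩
          have hs : ∀ i ∈ I₁ ∪ I₂, e i ∈ Submodule.span ℝ (Set.range g) :=
            fun i hi => Submodule.subset_span ⟨some ⟨i, hi⟩, rfl⟩
          rintro v (⟨i, hi, rfl⟩ | ⟨i, hi, rfl⟩)
          · exact hs i (Finset.mem_union_left _ hi)
          · rw [hf]
            exact Submodule.add_mem _ hn (hs i (Finset.mem_union_right _ hi))
        · rw [Submodule.span_le]
          have h1 : ∀ i ∈ I₁, e i ∈ Submodule.span ℝ ((e '' ↑I₁) ∪ (f '' ↑I₂)) :=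
            fun i hi => Submodule.subset_span (Or.inl ⟨i, hi, rfl⟩)
          have h2 : ∀ i ∈ I₂, f i ∈ Submodule.span ℝ ((e '' ↑I₁) ∪ (f '' ↑I₂)) :=
            fun i hi => Submodule.subset_span (Or.inr ⟨i, hi, rfl⟩)
          have h3 : h ∈ Submodule.span ℝ ((e '' ↑I₁) ∪ (f '' ↑I₂)) := by
            have := Submodule.sub_mem _ (h2 p hp2) (h1 p hp1)
            rwa [hf, add_sub_cancel_right] at this
          rintro v ⟨(_ | ⟨i, hi⟩), rfl⟩
          · exact h3
          · rcases Finset.mem_union.1 hi with hi | hi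
            · exact h1 i hi
            · have := Submodule.sub_mem _ (h2 i hi) h3
              rwa [hf, add_sub_cancel_left] at this
      have hl : LinearIndependent ℝ g := by
        rw [Fintype.linearIndependent_iff]
        intro a ha
        have := key (fun i => if hi : i ∈ I₁ ∪ I₂ then a (some ⟨i, hi⟩) else 0) (a none) (by
          rw [← ha, Fintype.sum_option, add_comm, ← Finset.sum_coe_sort]
          congr 1
          refine Finset.sum_congr rfl fun i _ => ?_
          rw [dif_pos i.2]
          rfl)
        rintro (_ | ⟨i, hi⟩)
        · exact this.1
        · have := this.2 i hi
          rwa [dif_pos hi] at this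
      rw [hr, finrank_span_eq_card hl, Fintype.card_option, Fintype.card_coe]
  refine ⟨part1, ?_⟩
  have hr : Set.range (Sum.elim (fun i : ↥I₁ => e i) (fun j : ↥I₂ => f j)) =
      (e '' ↑I₁) ∪ (f '' ↑I₂) := by
    rw [Set.Sum.elim_range]
    congr 1 <;> (ext v; simp)
  rw [linearIndependent_iff_card_eq_finrank_span, hr, Set.finrank, part1, Fintype.card_sum,
    Fintype.card_coe, Fintype.card_coe, ← Finset.card_union_add_card_inter]
  split_ifs with hd
  · simp [hd]
  · have := Finset.card_pos.2 (Finset.nonempty_iff_ne_empty.2 hd)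
    omega
end

section
/- Let I be a finite set with |I| = n ≥ 3, let J be a nonempty proper subset of I with |J| = m, and let i₁, …, i_m be an enumeration of J. Then cone({e_j : j ∈ J} ∪ {f_j : j ∈ J}) = ⋃_{k=1}^{m} cone({f_{i₁}, …, f_{i_k}} ∪ {e_{i_k}, e_{i_{k+1}}, …, e_{i_m}}). -/
open scoped BigOperators

/-- The set of all finite nonnegative linear combinations of elements of `S`. -/
def coneGen {I : Type*} (S : Set (I → ℝ)) : Set (I → ℝ) :=
  {x | ∃ (k : ℕ) (c : Fin k → ℝ) (v : Fin k → (I → ℝ)),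
    (∀ j, 0 ≤ c j) ∧ (∀ j, v j ∈ S) ∧ x = ∑ j, c j • v j}

theorem coneGen_zero {I : Type*} (S : Set (I → ℝ)) : (0 : I → ℝ) ∈ coneGen S :=
  ⟨0, fun _ => 0, fun _ => 0, fun _ => le_rfl, fun j => j.elim0, by simp⟩

theorem coneGen_add {I : Type*} {S : Set (I → ℝ)} {x y : I → ℝ} (hx : x ∈ coneGen S)
    (hy : y ∈ coneGen S) : x + y ∈ coneGen S := by
  obtain ⟨k, c, v, hc, hv, rfl⟩ := hx
  obtain ⟨k', c', v', hc', hv', rfl⟩ := hy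
  refine ⟨k + k', Fin.append c c', Fin.append v v', ?_, ?_, ?_⟩
  · intro j
    refine Fin.addCases (fun i => ?_) (fun i => ?_) j
    · simpa using hc i
    · simpa using hc' i
  · intro j
    refine Fin.addCases (fun i => ?_) (fun i => ?_) j
    · simpa using hv i
    · simpa using hv' i
  · simp [Fin.sum_univ_add]

theorem coneGen_smul {I : Type*} {S : Set (I → ℝ)} {x : I → ℝ} {a : ℝ} (ha : 0 ≤ a)
    (hx : x ∈ S) : a • x ∈ coneGen S :=
  ⟨1, fun _ => a, fun _ => x, fun _ => ha, fun _ => hx, by simp⟩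

theorem coneGen_sum {I ι : Type*} {S : Set (I → ℝ)} (t : Finset ι) (g : ι → I → ℝ)
    (hg : ∀ i ∈ t, g i ∈ coneGen S) : ∑ i ∈ t, g i ∈ coneGen S :=
  Finset.sum_induction g (· ∈ coneGen S) (fun _ _ => coneGen_add) (coneGen_zero S) hg

theorem coneGen_mono {I : Type*} {S T : Set (I → ℝ)} (hST : S ⊆ T) :
    coneGen S ⊆ coneGen T := by
  rintro x ⟨k, c, v, hc, hv, rfl⟩
  exact ⟨k, c, v, hc, fun j => hST (hv j), rfl⟩

theorem exists_cut {m : ℕ} (hm : 0 < m) (s : Fin m → ℝ) (B : ℝ)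
    (hB : 0 ≤ B) (hBs : B ≤ ∑ l, s l) :
    ∃ k : Fin m, ∑ l, (if l < k then s l else 0) ≤ B ∧
      B ≤ ∑ l, (if l < k then s l else 0) + s k := by
  classical
  have hex : ∃ n : ℕ, B ≤ ∑ l : Fin m, (if l.val < n + 1 then s l else 0) := by
    refine ⟨m, hBs.trans (le_of_eq (Finset.sum_congr rfl fun l _ => ?_))⟩
    rw [if_pos (by omega)]
  have hlt : Nat.find hex < m := by
    refine (Nat.find_le (n := m - 1) (h := hex) ?_).trans_lt (by omega)
    refine hBs.trans (le_of_eq (Finset.sum_congr rfl fun l _ => ?_))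
    rw [if_pos (by omega)]
  have hsp := Nat.find_spec hex
  have hmin := fun n => Nat.find_min hex (m := n)
  generalize Nat.find hex = n at *
  refine ⟨⟨n, hlt⟩, ?_, ?_⟩
  · rcases n with _ | n
    · simpa [Fin.lt_def] using hB
    · have := hmin n (by omega)
      simp only [Fin.lt_def]
      linarith
  · refine hsp.trans (le_of_eq ?_)
    have : s ⟨n, hlt⟩ = ∑ l : Fin m, (if l = ⟨n, hlt⟩ then s l else 0) := by simp
    rw [this, ← Finset.sum_add_distrib]
    refine Finset.sum_congr rfl fun l _ => ?_
    simp only [Fin.lt_def, Fin.ext_iff]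
    split_ifs <;> first | omega | simp

/-- Point 3 of proposition `prop:descr:ev` (covering part): for an enumeration
`i₁, …, i_m` of a nonempty proper subset `J ⊊ I`,
`cone({e_j, f_j : j ∈ J}) = ⋃_{k=1}^m cone({f_{i₁},…,f_{i_k}, e_{i_k},…,e_{i_m}})`. -/
theorem stmt_8 {I : Type*} [Fintype I] [DecidableEq I] (hn : 3 ≤ Fintype.card I)
    (e : I → (I → ℝ)) (he : ∀ i, e i = Pi.single i 1)
    (h : I → ℝ) (hh : h = -∑ i, e i)
    (f : I → (I → ℝ)) (hf : ∀ i, f i = h + e i)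
    (J : Finset I) (hJne : J.Nonempty) (hJprop : J ≠ Finset.univ)
    (m : ℕ) (hm : J.card = m)
    (idx : Fin m → I) (hinj : Function.Injective idx)
    (himg : Finset.image idx Finset.univ = J) :
    coneGen ((e '' ↑J) ∪ (f '' ↑J)) =
      ⋃ k : Fin m,
        coneGen ((f '' (idx '' {l : Fin m | l ≤ k})) ∪ (e '' (idx '' {l : Fin m | k ≤ l}))) := by
  have hmpos : 0 < m := hm ▸ hJne.card_pos
  have hmem : ∀ l, idx l ∈ J := fun l => himg ▸ Finset.mem_image_of_mem _ (Finset.mem_univ l)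
  have hsurj : ∀ j ∈ J, ∃ l, idx l = j := by
    intro j hj
    rw [← himg] at hj
    simpa using hj
  apply Set.Subset.antisymm
  · intro x hx
    have key : ∃ (s : Fin m → ℝ) (B : ℝ), (∀ l, 0 ≤ s l) ∧ 0 ≤ B ∧ B ≤ ∑ l, s l ∧
        x = ∑ l, s l • e (idx l) + B • h := by
      obtain ⟨k, c, v, hc, hv, rfl⟩ := hx
      refine Finset.sum_induction (fun j => c j • v j) (fun x => ∃ (s : Fin m → ℝ) (B : ℝ),
        (∀ l, 0 ≤ s l) ∧ 0 ≤ B ∧ B ≤ ∑ l, s l ∧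
        x = ∑ l, s l • e (idx l) + B • h) ?_ ?_ ?_
      · rintro _ _ ⟨s, B, hs, hB, hBs, rfl⟩ ⟨s', B', hs', hB', hBs', rfl⟩
        refine ⟨s + s', B + B', fun l => add_nonneg (hs l) (hs' l), add_nonneg hB hB', ?_, ?_⟩
        · simp only [Pi.add_apply, Finset.sum_add_distrib]
          linarith
        · simp only [Pi.add_apply, Finset.sum_add_distrib, add_smul]
          abel
      · exact ⟨0, 0, by simp, by simp, by simp, by simp⟩
      · intro j _
        have hcj := hc j
        rcases hv j with ⟨i, hi, hij⟩ | ⟨i, hi, hij⟩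
        · obtain ⟨l, rfl⟩ := hsurj i hi
          refine ⟨Pi.single l (c j), 0, fun l' => ?_, le_rfl, ?_, ?_⟩
          · by_cases hl : l' = l
            · subst hl; simpa using hcj
            · simp [hl]
          · simpa using hcj
          · simp [Pi.single_apply, ite_smul, hij]
        · obtain ⟨l, rfl⟩ := hsurj i hi
          refine ⟨Pi.single l (c j), c j, fun l' => ?_, hcj, ?_, ?_⟩
          · by_cases hl : l' = l
            · subst hl; simpa using hcj
            · simp [hl]
          · simp
          · simp [Pi.single_apply, ite_smul, ← hij, hf, add_comm]
    obtain ⟨s, B, hs, hB, hBs, rfl⟩ := key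
    obtain ⟨k, hk1, hk2⟩ := exists_cut hmpos s B hB hBs
    refine Set.mem_iUnion.2 ⟨k, ?_⟩
    obtain ⟨D, hD⟩ : ∃ D, D = B - ∑ l, (if l < k then s l else 0) := ⟨_, rfl⟩
    obtain ⟨p, hp⟩ : ∃ p : Fin m → ℝ, ∀ l, p l = (if l < k then s l else 0) +
      (if l = k then D else 0) := ⟨_, fun _ => rfl⟩
    have hpB : ∑ l, p l = B := by
      simp only [hp, Finset.sum_add_distrib]
      simp [hD]
    have hx : ∑ l, s l • e (idx l) + B • h =
        ∑ l, p l • f (idx l) + ∑ l, (s l - p l) • e (idx l) := by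
      rw [← hpB, Finset.sum_smul, ← Finset.sum_add_distrib, ← Finset.sum_add_distrib]
      refine Finset.sum_congr rfl fun l _ => ?_
      rw [hf]
      module
    rw [hx]
    refine coneGen_add (coneGen_sum _ _ fun l _ => ?_) (coneGen_sum _ _ fun l _ => ?_)
    · rcases lt_trichotomy l k with hl | hl | hl
      · refine coneGen_smul ?_ (Or.inl ⟨_, ⟨l, hl.le, rfl⟩, rfl⟩)
        simpa [hp, hl, hl.ne] using hs l
      · refine coneGen_smul ?_ (Or.inl ⟨_, ⟨l, hl.le, rfl⟩, rfl⟩)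
        subst hl
        simp only [hp, lt_irrefl, if_false, if_true]
        linarith
      · have : p l = 0 := by simp [hp, hl.not_gt, hl.ne']
        rw [this, zero_smul]
        exact coneGen_zero _
    · rcases lt_trichotomy l k with hl | hl | hl
      · have : p l = s l := by simp [hp, hl, hl.ne]
        rw [this, sub_self, zero_smul]
        exact coneGen_zero _
      · refine coneGen_smul ?_ (Or.inr ⟨_, ⟨l, hl.ge, rfl⟩, rfl⟩)
        subst hl
        simp only [hp, lt_irrefl, if_false, if_true]
        linarith
      · refine coneGen_smul ?_ (Or.inr ⟨_, ⟨l, hl.le, rfl⟩, rfl⟩)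
        simpa [hp, hl.not_gt, hl.ne'] using hs l
  · refine Set.iUnion_subset fun k => coneGen_mono ?_
    rintro _ (⟨_, ⟨l, _, rfl⟩, rfl⟩ | ⟨_, ⟨l, _, rfl⟩, rfl⟩)
    · exact Or.inr ⟨_, hmem l, rfl⟩
    · exact Or.inl ⟨_, hmem l, rfl⟩
end

section
/- Let κ be a finite field with q elements and let n ≥ 1 be an integer. Then N_n(κ) = q · N_{n−1}(κ) + (q−1) · q^{2n−2}, where N_m(κ) denotes the number of pairs (x, y) ∈ κ^m × κ^m with ∑_{i=1}^{m} x_i y_i = 0 (so N₀(κ) = 1). -/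
open scoped BigOperators

open Classical in
lemma aux_card (κ : Type*) [Field κ] [Fintype κ] (m : ℕ) :
    Nat.card {p : (Fin m → κ) × (Fin m → κ) // ∑ i, p.1 i * p.2 i = 0}
      = ∑ x : Fin m → κ, ∑ y : Fin m → κ, if ∑ i, x i * y i = 0 then 1 else 0 := by
  rw [Nat.card_eq_fintype_card, Fintype.card_subtype, Finset.card_filter,
    Fintype.sum_prod_type]

lemma aux_cons (κ : Type*) [Fintype κ] (m : ℕ) (f : (Fin (m+1) → κ) → ℕ) :
    ∑ x, f x = ∑ x : Fin m → κ, ∑ a : κ, f (Fin.cons a x) := by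
  classical
  rw [Finset.sum_comm, ← Fintype.sum_prod_type' (f := fun a x => f (Fin.cons a x))]
  exact (Fintype.sum_equiv (Fin.consEquiv (fun _ : Fin (m+1) => κ)) _ _ (fun _ => rfl)).symm

open Classical in
lemma aux_one (κ : Type*) [Field κ] [Fintype κ] (s : κ) :
    (∑ a : κ, ∑ b : κ, if a * b + s = 0 then 1 else 0)
      = Fintype.card κ * (if s = 0 then 1 else 0) + (Fintype.card κ - 1) := by
  rw [← Finset.add_sum_erase _ _ (Finset.mem_univ (0 : κ))]
  congr 1
  · simp
  · rw [Finset.sum_congr rfl (g := fun _ => 1)]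
    · simp
    · intro a ha
      have ha : a ≠ 0 := by simpa using ha
      have : ∀ b : κ, a * b + s = 0 ↔ b = -s / a := by
        intro b
        rw [eq_div_iff ha, eq_neg_iff_add_eq_zero, mul_comm]
      simp [this]

/-- Recursion for the number `N_n(κ)` of pairs `(x,y) ∈ κⁿ × κⁿ` with `∑ xᵢyᵢ = 0`:
`N_n = q·N_{n-1} + (q-1)·q^{2n-2}`. -/
theorem stmt_11 (κ : Type*) [Field κ] [Fintype κ] (q : ℕ) (hq : Fintype.card κ = q)
    (N : ℕ → ℕ)
    (hN : ∀ m : ℕ, N m =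
      Nat.card {p : (Fin m → κ) × (Fin m → κ) // ∑ i, p.1 i * p.2 i = 0})
    (n : ℕ) (hn : 1 ≤ n) :
    N n = q * N (n - 1) + (q - 1) * q ^ (2 * n - 2) := by
  classical
  obtain ⟨m, rfl⟩ : ∃ m, n = m + 1 := ⟨n - 1, by omega⟩
  have h2 : 2 * (m + 1) - 2 = m + m := by omega
  rw [hN, hN, h2, Nat.add_sub_cancel, aux_card, aux_card, aux_cons]
  have key : ∀ x : Fin m → κ, (∑ a : κ, ∑ y : Fin (m+1) → κ,
      if ∑ i, (Fin.cons a x : Fin (m+1) → κ) i * y i = 0 then 1 else 0) =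
      ∑ y : Fin m → κ, (q * (if ∑ i, x i * y i = 0 then 1 else 0) + (q - 1)) := by
    intro x
    simp_rw [aux_cons, Fin.sum_univ_succ, Fin.cons_zero, Fin.cons_succ]
    rw [Finset.sum_comm]
    refine Finset.sum_congr rfl fun y _ => ?_
    rw [← hq]
    convert aux_one κ (∑ i, x i * y i)
  rw [Finset.sum_congr rfl fun x _ => key x]
  simp only [Finset.sum_add_distrib, ← Finset.mul_sum]
  simp [hq, pow_add]
  ring
end

section
/- Let κ be a finite field with q elements and let n ≥ 1 be an integer. Then the (convergent) sum of nonnegative real numbers ∑_{d ∈ ℕⁿ} q^{min(1, d₁, …, d_n)} · q^{−(d₁+⋯+d_n)} equals q^{−2n+1} · (1 − q^{−1})^{−n} · N_n(κ), where N_n(κ) denotes the number of pairs (x, y) ∈ κⁿ × κⁿ with ∑_{i=1}^{n} x_i y_i = 0. -/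
open scoped BigOperators

theorem aux_prod (f : ℕ → ℝ) (a : ℝ) (h0 : ∀ k, 0 ≤ f k) (h : HasSum f a) (n : ℕ) :
    HasSum (fun d : Fin n → ℕ => ∏ i, f (d i)) (a ^ n) := by
  induction n with
  | zero =>
    simp
  | succ n ih =>
    have hs : Summable (fun x : ℕ × (Fin n → ℕ) => f x.1 * ∏ i, f (x.2 i)) :=
      Summable.mul_of_nonneg (f := f) (g := fun d : Fin n → ℕ => ∏ i, f (d i))
        h.summable ih.summable (Pi.le_def.mpr h0)
        (Pi.le_def.mpr (fun d => Finset.prod_nonneg (fun i _ => h0 (d i))))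
    have h2 := HasSum.mul (f := f) (g := fun d : Fin n → ℕ => ∏ i, f (d i)) h ih hs
    rw [← (Fin.consEquiv (fun _ : Fin (n+1) => ℕ)).hasSum_iff, pow_succ']
    have he : (fun d : Fin (n+1) → ℕ => ∏ i, f (d i)) ∘ (Fin.consEquiv (fun _ : Fin (n+1) => ℕ))
        = fun x : ℕ × (Fin n → ℕ) => f x.1 * ∏ i, f (x.2 i) := by
      funext x
      simp [Fin.consEquiv, Fin.prod_univ_succ]
    rw [he]
    exact h2

theorem aux_ker (κ : Type*) [Field κ] [Fintype κ] (n : ℕ) (x : Fin n → κ) (hx : x ≠ 0) :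
    Fintype.card κ * Nat.card {y : Fin n → κ // ∑ i, x i * y i = 0} = Fintype.card κ ^ n := by
  classical
  let φ : (Fin n → κ) →ₗ[κ] κ := Fintype.linearCombination κ x
  have hφ : ∀ y, φ y = ∑ i, x i * y i := fun y => by
    simp [φ, Fintype.linearCombination_apply, mul_comm]
  have hsurj : Function.Surjective φ := by
    apply LinearMap.surjective
    intro h
    apply hx
    ext i
    have := congrArg (fun ψ => ψ (Pi.single i 1)) h
    simpa [hφ, Pi.single_apply] using this
  have h1 := Submodule.card_eq_card_quotient_mul_card (LinearMap.ker φ)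
  rw [Nat.card_congr (φ.quotKerEquivOfSurjective hsurj).toEquiv] at h1
  have h2 : Nat.card (LinearMap.ker φ) = Nat.card {y : Fin n → κ // ∑ i, x i * y i = 0} :=
    Nat.card_congr (Equiv.subtypeEquivRight (fun y => by rw [LinearMap.mem_ker, hφ]))
  rw [h2] at h1
  simp only [Nat.card_eq_fintype_card, Fintype.card_fun, Fintype.card_fin] at h1 ⊢
  rw [h1, mul_comm]

theorem aux_count (κ : Type*) [Field κ] [Fintype κ] (n : ℕ) :
    (Fintype.card κ : ℝ) *
      (Nat.card {p : (Fin n → κ) × (Fin n → κ) // ∑ i, p.1 i * p.2 i = 0} : ℝ) =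
    (Fintype.card κ : ℝ) ^ n * ((Fintype.card κ : ℝ) ^ n + Fintype.card κ - 1) := by
  classical
  let e : {p : (Fin n → κ) × (Fin n → κ) // ∑ i, p.1 i * p.2 i = 0} ≃
      (Σ x : Fin n → κ, {y : Fin n → κ // ∑ i, x i * y i = 0}) :=
    ⟨fun p => ⟨p.1.1, p.1.2, p.2⟩, fun s => ⟨(s.1, s.2.1), s.2.2⟩, fun _ => rfl, fun _ => rfl⟩
  rw [Nat.card_congr e, Nat.card_sigma]
  push_cast
  rw [Finset.mul_sum]
  have h : ∀ x : Fin n → κ, (Fintype.card κ : ℝ) *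
      (Nat.card {y : Fin n → κ // ∑ i, x i * y i = 0} : ℝ) =
      (Fintype.card κ : ℝ) ^ n +
        if x = 0 then ((Fintype.card κ : ℝ) - 1) * (Fintype.card κ : ℝ) ^ n else 0 := by
    intro x
    split_ifs with hx
    · subst hx
      simp
      ring
    · rw [add_zero]
      exact_mod_cast aux_ker κ n x hx
  rw [Finset.sum_congr rfl (fun x _ => h x), Finset.sum_add_distrib]
  simp
  ring

/-- `∑_{d ∈ ℕⁿ} q^{min(1,d₁,…,dₙ)} q^{-(d₁+⋯+dₙ)} = q^{-2n+1}(1-q⁻¹)^{-n} N_n(κ)`,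
where `N_n(κ)` counts pairs `(x,y) ∈ κⁿ × κⁿ` with `∑ xᵢyᵢ = 0`. -/
theorem stmt_12 (κ : Type*) [Field κ] [Fintype κ] (q : ℕ) (hq : Fintype.card κ = q)
    (n : ℕ) (hn : 1 ≤ n) :
    (∑' d : Fin n → ℕ,
        (q : ℝ) ^ (min 1 (Finset.univ.inf' ⟨⟨0, by omega⟩, Finset.mem_univ _⟩ d)) *
          (q : ℝ) ^ (-(∑ i, (d i : ℤ)))) =
      (q : ℝ) ^ (-(2 * (n : ℤ)) + 1) * ((1 - (q : ℝ)⁻¹) ^ n)⁻¹ *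
        (Nat.card {p : (Fin n → κ) × (Fin n → κ) // ∑ i, p.1 i * p.2 i = 0} : ℝ) := by
  have hq1 : (1 : ℝ) < q := by
    rw [← hq]
    exact_mod_cast Fintype.one_lt_card
  have hq0 : (q : ℝ) ≠ 0 := by positivity
  have hr1 : (q : ℝ)⁻¹ < 1 := inv_lt_one_of_one_lt₀ hq1
  have hr0 : (0 : ℝ) ≤ (q : ℝ)⁻¹ := by positivity
  have hf := hasSum_geometric_of_lt_one hr0 hr1
  have hg : HasSum (fun k : ℕ => if k = 0 then (0 : ℝ) else (q : ℝ)⁻¹ ^ k)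
      ((q : ℝ)⁻¹ * (1 - (q : ℝ)⁻¹)⁻¹) := by
    rw [← hasSum_nat_add_iff' 1]
    simpa [pow_succ'] using hf.mul_left (q : ℝ)⁻¹
  have hF := aux_prod _ _ (fun k => by positivity) hf n
  have hG := aux_prod _ _ (fun k => by split_ifs <;> positivity) hg n
  have hS := hF.add (hG.mul_left ((q : ℝ) - 1))
  have hc := aux_count κ n
  rw [hq] at hc
  have hN : (Nat.card {p : (Fin n → κ) × (Fin n → κ) // ∑ i, p.1 i * p.2 i = 0} : ℝ) =
      (q : ℝ)⁻¹ * ((q : ℝ) ^ n * ((q : ℝ) ^ n + q - 1)) := by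
    rw [← hc]
    field_simp
  rw [hN]
  convert hS.tsum_eq using 1
  · congr 1
    ext d
    have hz : (q : ℝ) ^ (-(∑ i, (d i : ℤ))) = ∏ i, (q : ℝ)⁻¹ ^ (d i) := by
      rw [Finset.prod_pow_eq_pow_sum, zpow_neg, inv_pow, ← Nat.cast_sum, zpow_natCast]
    rw [hz]
    by_cases hd : ∃ i, d i = 0
    · obtain ⟨i, hi⟩ := hd
      have h1 : (Finset.univ.inf' ⟨⟨0, by omega⟩, Finset.mem_univ _⟩ d) = 0 :=
        Nat.le_zero.mp ((Finset.inf'_le d (Finset.mem_univ i)).trans hi.le)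
      rw [h1, Finset.prod_eq_zero (f := fun i => if d i = 0 then (0 : ℝ) else (q : ℝ)⁻¹ ^ d i)
        (Finset.mem_univ i) (by simp [hi])]
      simp
    · push Not at hd
      have h1 : min 1 (Finset.univ.inf' ⟨⟨0, by omega⟩, Finset.mem_univ _⟩ d) = 1 := by
        apply min_eq_left
        apply Finset.le_inf'
        intro i _
        exact Nat.one_le_iff_ne_zero.mpr (hd i)
      rw [h1]
      simp only [hd, if_false]
      ring
  · have h2 : (q : ℝ) ^ (-(2 * (n : ℤ)) + 1) = ((q : ℝ) ^ n)⁻¹ * ((q : ℝ) ^ n)⁻¹ * q := by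
      rw [zpow_add₀ hq0, zpow_neg, two_mul, zpow_add₀ hq0, zpow_natCast, mul_inv, zpow_one]
    rw [h2, mul_pow, inv_pow, inv_pow]
    generalize ((1 - (q : ℝ)⁻¹) ^ n)⁻¹ = A
    have : (q : ℝ) ^ n ≠ 0 := pow_ne_zero _ hq0
    field_simp
    try ring
end

section
/- Let κ be a finite field with q elements and let n ≥ 2 be an integer. For f₀ ∈ {0,1}, f = (f₁,…,f_n) ∈ {0,1}ⁿ and g = (g₁,…,g_n) ∈ {0,1}ⁿ, define fact(f₀,f,g) = (1−q⁻¹)ⁿ · q^{−f₀} · ∑_{d∈ℕⁿ, d_i ≥ f_i+g_i for all i} q^{min(d₁,…,d_n) − (d₁+⋯+d_n)} (a convergent sum of positive reals), and define dens(f₀,f,g) = q^{−2n} · #{ (x₀, x, y) ∈ κ × κⁿ × κⁿ : x₀ = 0 if f₀ = 1; x_i = 0 whenever f_i = 1; y_i = 0 whenever g_i = 1; and ∑_{i=1}^{n} x_i y_i = 0 }. Then for all f₀ ∈ {0,1}, all f₂,…,f_n ∈ {0,1} and all g ∈ {0,1}ⁿ: fact(f₀,(0,f₂,…,f_n),g)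 − fact(f₀,(1,f₂,…,f_n),g) = dens(f₀,(0,f₂,…,f_n),g) − dens(f₀,(1,f₂,…,f_n),g). -/
lemma addChar_sum {ι κ : Type*} [AddCommMonoid κ] (ψ : AddChar κ ℂ) (s : Finset ι) (h : ι → κ) :
    ψ (∑ i ∈ s, h i) = ∏ i ∈ s, ψ (h i) := by
  classical
  induction s using Finset.induction_on with
  | empty => simp
  | insert a s ha ih => rw [Finset.sum_insert ha, Finset.prod_insert ha, AddChar.map_add_eq_mul, ih]

lemma local_sum {κ : Type*} [Field κ] [Fintype κ] [DecidableEq κ] (ψ : AddChar κ ℂ)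
    (hψ : ψ.IsPrimitive) (a b : ℕ) (ha : a ≤ 1) (hb : b ≤ 1) (t : κ) :
    ∑ p : κ × κ, (if a = 1 → p.1 = 0 then (1:ℂ) else 0) * (if b = 1 → p.2 = 0 then 1 else 0) *
      ψ (t * (p.1 * p.2)) =
      (Fintype.card κ : ℂ) ^ 2 * (if t = 0 then ((Fintype.card κ : ℂ)⁻¹) ^ (a + b)
        else ((Fintype.card κ : ℂ)⁻¹) ^ (max (a + b) 1)) := by
  have hq : (Fintype.card κ : ℂ) ≠ 0 := by simp
  rw [Fintype.sum_prod_type]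
  have key : ∀ x : κ, t ≠ 0 → ∑ y : κ, ψ (t * (x * y)) = if x = 0 then (Fintype.card κ : ℂ) else 0 := by
    intro x ht
    have := AddChar.sum_mulShift (t * x) hψ
    simp only [mul_eq_zero, ht, false_or] at this
    rw [Nat.cast_ite, Nat.cast_zero] at this
    rw [← this]
    refine Finset.sum_congr rfl fun y _ => ?_
    congr 1; ring
  by_cases ht : t = 0
  · subst ht
    interval_cases a <;> interval_cases b <;> simp <;> field_simp
  · interval_cases a <;> interval_cases b <;> simp [ht, key] <;> field_simp

lemma count {κ : Type*} [Field κ] [Fintype κ] (n : ℕ) (f₀ : ℕ) (hf₀ : f₀ ≤ 1)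
    (f g : Fin n → ℕ) (hf : ∀ i, f i ≤ 1) (hg : ∀ i, g i ≤ 1) :
    (Fintype.card κ : ℂ) ^ (-(2 * (n : ℤ))) *
        (Nat.card {p : κ × (Fin n → κ) × (Fin n → κ) //
          (f₀ = 1 → p.1 = 0) ∧ (∀ i, f i = 1 → p.2.1 i = 0) ∧
          (∀ i, g i = 1 → p.2.2 i = 0) ∧ ∑ i, p.2.1 i * p.2.2 i = 0} : ℂ) =
    (Fintype.card κ : ℂ)⁻¹ ^ f₀ * (∏ i, (Fintype.card κ : ℂ)⁻¹ ^ (f i + g i) +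
      ((Fintype.card κ : ℂ) - 1) * ∏ i, (Fintype.card κ : ℂ)⁻¹ ^ (max (f i + g i) 1)) := by
  classical
  have hq : (Fintype.card κ : ℂ) ≠ 0 := by simp
  set ψ := AddChar.FiniteField.primitiveChar_to_Complex κ with hψd
  have hψ : ψ.IsPrimitive := AddChar.FiniteField.primitiveChar_to_Complex_isPrimitive κ
  have h1 : (Nat.card {p : κ × (Fin n → κ) × (Fin n → κ) //
          (f₀ = 1 → p.1 = 0) ∧ (∀ i, f i = 1 → p.2.1 i = 0) ∧
          (∀ i, g i = 1 → p.2.2 i = 0) ∧ ∑ i, p.2.1 i * p.2.2 i = 0} : ℂ) =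
      ∑ c : κ, ∑ z : Fin n → κ × κ, (if f₀ = 1 → c = 0 then (1:ℂ) else 0) *
        ((∏ i, (if f i = 1 → (z i).1 = 0 then (1:ℂ) else 0) *
          (if g i = 1 → (z i).2 = 0 then (1:ℂ) else 0)) *
          (if ∑ i, (z i).1 * (z i).2 = 0 then (1:ℂ) else 0)) := by
    rw [Nat.card_eq_fintype_card, Fintype.card_subtype, Finset.card_filter, Fintype.sum_prod_type]
    push_cast
    refine Finset.sum_congr rfl fun c _ => ?_
    rw [← (Equiv.arrowProdEquivProdArrow (Fin n) (fun _ => κ) (fun _ => κ)).sum_comp]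
    refine Finset.sum_congr rfl fun z _ => ?_
    rw [Finset.prod_mul_distrib, Finset.prod_ite_zero, Finset.prod_ite_zero]
    simp only [Equiv.arrowProdEquivProdArrow, Equiv.coe_fn_mk, Finset.mem_univ, true_imp_iff, Finset.prod_const_one,
      ite_zero_mul_ite_zero, mul_one]
    congr 1
    simp only [and_assoc]
  have h2 : ∀ s : κ, (if s = 0 then (1:ℂ) else 0) = (Fintype.card κ : ℂ)⁻¹ * ∑ t : κ, ψ (t * s) := by
    intro s
    rw [AddChar.sum_mulShift s hψ]
    split_ifs <;> simp
  have h3 : ∑ c : κ, (if f₀ = 1 → c = 0 then (1:ℂ) else 0) =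
      (Fintype.card κ : ℂ) * (Fintype.card κ : ℂ)⁻¹ ^ f₀ := by
    interval_cases f₀ <;> simp
  have h4 : ∀ t : κ, ∑ z : Fin n → κ × κ, ((∏ i, (if f i = 1 → (z i).1 = 0 then (1:ℂ) else 0) *
          (if g i = 1 → (z i).2 = 0 then (1:ℂ) else 0)) * ψ (t * ∑ i, (z i).1 * (z i).2)) =
      (Fintype.card κ : ℂ) ^ (2 * n) * (if t = 0 then ∏ i, (Fintype.card κ : ℂ)⁻¹ ^ (f i + g i) else 
        ∏ i, (Fintype.card κ : ℂ)⁻¹ ^ (max (f i + g i) 1)) := by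
    intro t
    have := Fintype.prod_sum (fun (i : Fin n) (p : κ × κ) =>
      (if f i = 1 → p.1 = 0 then (1:ℂ) else 0) * (if g i = 1 → p.2 = 0 then 1 else 0) *
      ψ (t * (p.1 * p.2)))
    simp only [local_sum ψ hψ _ _ (hf _) (hg _)] at this
    rw [Finset.prod_mul_distrib] at this
    simp only [Finset.prod_const, Finset.card_univ, Fintype.card_fin, ← pow_mul] at this
    calc _ = _ := Finset.sum_congr rfl fun z _ => ?_
      _ = _ := this.symm
      _ = _ := by split_ifs <;> rfl
    rw [Finset.prod_mul_distrib (g := fun i => ψ _), Finset.mul_sum, addChar_sum]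
  rw [h1]
  simp only [← Finset.mul_sum]
  rw [← Finset.sum_mul, h3]
  simp only [h2, Finset.mul_sum]
  rw [Finset.sum_comm]
  simp only [mul_left_comm _ (Fintype.card κ : ℂ)⁻¹, ← Finset.mul_sum, h4]
  have hc : (Finset.univ.filter (fun x : κ => x = 0)) = {0} := by ext; simp
  rw [Finset.sum_ite, hc]
  simp [Finset.filter_ne', Finset.card_erase_of_mem, Nat.cast_sub Fintype.card_pos, zpow_neg]
  have : (Fintype.card κ : ℂ) ^ (2 * (n:ℤ)) = (Fintype.card κ : ℂ) ^ (2 * n) := by norm_cast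
  rw [this]
  field_simp

lemma hasSum_pi : ∀ (m : ℕ) (F : Fin m → ℕ → ℝ) (A : Fin m → ℝ) (_ : ∀ i k, 0 ≤ F i k)
    (_ : ∀ i, HasSum (F i) (A i)), HasSum (fun d : Fin m → ℕ => ∏ i, F i (d i)) (∏ i, A i) := by
  intro m
  induction m with
  | zero => intro F A _ _; simp
  | succ m ih =>
    intro F A h0 hs
    have h := ih (fun i => F i.succ) (fun i => A i.succ) (fun i => h0 _) (fun i => hs _)
    have h3 : Summable (fun p : ℕ × (Fin m → ℕ) => F 0 p.1 * ∏ i : Fin m, F i.succ (p.2 i)) :=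
      Summable.mul_of_nonneg (f := F 0) (g := fun d : Fin m → ℕ => ∏ i : Fin m, F i.succ (d i))
        (hs 0).summable h.summable (h0 0) (fun d => Finset.prod_nonneg fun i _ => h0 _ _)
    have h2 : HasSum (fun p : ℕ × (Fin m → ℕ) => F 0 p.1 * ∏ i : Fin m, F i.succ (p.2 i))
        (A 0 * ∏ i : Fin m, A i.succ) := 
      HasSum.mul (f := F 0) (g := fun d : Fin m → ℕ => ∏ i : Fin m, F i.succ (d i)) (hs 0) h h3
    rw [← (Fin.consEquiv (fun _ : Fin (m+1) => ℕ)).hasSum_iff, Fin.prod_univ_succ]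
    convert h2 using 1
    funext p
    simp [Fin.consEquiv, Fin.prod_univ_succ]

lemma hasSum_tail (x : ℝ) (h0 : 0 ≤ x) (h1 : x < 1) (b : ℕ) :
    HasSum (fun k : ℕ => if b ≤ k then x ^ k else 0) (x ^ b * (1 - x)⁻¹) := by
  have h := (hasSum_geometric_of_lt_one h0 h1).mul_left (x ^ b)
  rw [← (add_left_injective b).hasSum_iff]
  · have e : ((fun k : ℕ => if b ≤ k then x ^ k else 0) ∘ fun k => k + b) = fun i => x ^ b * x ^ i := by
      funext k
      simp [pow_add, mul_comm]
    rw [e]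
    exact h
  · intro k hk
    rw [if_neg]
    intro hb
    exact hk ⟨k - b, by simp; omega⟩

lemma hasSum_S (m : ℕ) (x : ℝ) (h0 : 0 ≤ x) (h1 : x < 1) (b : Fin m → ℕ) :
    HasSum (fun d : Fin m → ℕ => if ∀ i, b i ≤ d i then x ^ (∑ i, d i) else 0)
      ((∏ i, x ^ b i) * (1 - x)⁻¹ ^ m) := by
  have := hasSum_pi m (fun i k => if b i ≤ k then x ^ k else 0) _
    (fun i k => by split_ifs <;> positivity) (fun i => hasSum_tail x h0 h1 (b i))
  rw [Finset.prod_mul_distrib, Finset.prod_const, Finset.card_univ, Fintype.card_fin] at this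
  convert this using 1
  funext d
  rw [Finset.prod_ite_zero, Finset.prod_pow_eq_pow_sum]
  simp

lemma summable_W (m : ℕ) (hm : 1 ≤ m) (x : ℝ) (h0 : 0 ≤ x) (h1 : x < 1) (h : (Finset.univ : Finset (Fin (m+1))).Nonempty) :
    Summable (fun d : Fin (m+1) → ℕ => x ^ (∑ i, d i - Finset.univ.inf' h d)) := by
  have hr0 := Real.sqrt_nonneg x
  have hr1 : √x < 1 := by rw [Real.sqrt_lt' one_pos]; simpa
  have hS := (hasSum_S (m+1) (√x) hr0 hr1 0).summable
  refine Summable.of_nonneg_of_le (fun d => by positivity) (fun d => ?_) hS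
  simp only [Pi.zero_apply, zero_le, implies_true, if_true]
  nth_rewrite 1 [← Real.sq_sqrt h0]
  rw [← pow_mul]
  refine pow_le_pow_of_le_one hr0 hr1.le ?_
  obtain ⟨m, rfl⟩ : ∃ k, m = k + 1 := ⟨m - 1, by omega⟩
  have a := Finset.inf'_le d (Finset.mem_univ (0 : Fin (m+1+1)))
  have b := Finset.inf'_le d (Finset.mem_univ (1 : Fin (m+1+1)))
  have c : d 0 + d 1 ≤ ∑ i, d i := by
    rw [Fin.sum_univ_succ, Fin.sum_univ_succ]; simp
  omega

lemma fact_diff (m : ℕ) (hm : 1 ≤ m) (q : ℕ) (hq : 2 ≤ q) (f g : Fin (m+1) → ℕ)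
    (hg : g 0 ≤ 1) (h : (Finset.univ : Finset (Fin (m+1))).Nonempty) :
    (∑' d : Fin (m+1) → ℕ, (if ∀ i, Function.update f 0 0 i + g i ≤ d i then
        (q : ℝ) ^ (((Finset.univ.inf' h d : ℕ) : ℤ) - ∑ i, (d i : ℤ)) else 0)) -
    (∑' d : Fin (m+1) → ℕ, (if ∀ i, Function.update f 0 1 i + g i ≤ d i then
        (q : ℝ) ^ (((Finset.univ.inf' h d : ℕ) : ℤ) - ∑ i, (d i : ℤ)) else 0)) =
    (1 - (q:ℝ)⁻¹)⁻¹ ^ m * (if g 0 = 0 then ∏ i : Fin m, (q:ℝ)⁻¹ ^ (f i.succ + g i.succ) else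
      (q:ℝ)⁻¹ * (∏ i : Fin m, (q:ℝ)⁻¹ ^ (f i.succ + g i.succ) +
        (q - 1) * ∏ i : Fin m, (q:ℝ)⁻¹ ^ (max (f i.succ + g i.succ) 1))) := by
  have hq0 : (q:ℝ) ≠ 0 := by positivity
  set x := (q:ℝ)⁻¹ with hx
  have h0 : 0 ≤ x := by positivity
  have h1 : x < 1 := inv_lt_one_of_one_lt₀ (by exact_mod_cast hq)
  have hW : ∀ d : Fin (m+1) → ℕ, (q : ℝ) ^ (((Finset.univ.inf' h d : ℕ) : ℤ) - ∑ i, (d i : ℤ)) =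
      x ^ (∑ i, d i - Finset.univ.inf' h d) := by
    intro d
    have a : Finset.univ.inf' h d ≤ ∑ i, d i :=
      (Finset.inf'_le d (Finset.mem_univ 0)).trans
        (Finset.single_le_sum (f := d) (fun _ _ => Nat.zero_le _) (Finset.mem_univ 0))
    rw [hx, inv_pow, ← zpow_natCast, ← zpow_neg]
    congr 1
    push_cast [Nat.cast_sub a]
    ring
  simp only [hW]
  have hs := summable_W m hm x h0 h1 h
  have hs' : ∀ b : Fin (m+1) → ℕ, Summable (fun d : Fin (m+1) → ℕ => if ∀ i, b i ≤ d i then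
      x ^ (∑ i, d i - Finset.univ.inf' h d) else 0) := by
    intro b
    refine Summable.of_nonneg_of_le (fun d => ?_) (fun d => ?_) hs
    · split_ifs <;> positivity
    · split_ifs
      · exact le_rfl
      · positivity
  rw [← (hs' (fun i => Function.update f 0 0 i + g i)).tsum_sub
    (hs' (fun i => Function.update f 0 1 i + g i))]
  have hinj : Function.Injective (fun e : Fin m → ℕ => (Fin.cons (g 0) e : Fin (m+1) → ℕ)) :=
    Fin.cons_right_injective (α := fun _ => ℕ) (g 0)
  rw [← hinj.tsum_eq]
  swap
  · intro d hd
    refine ⟨Fin.tail d, ?_⟩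
    have : g 0 = d 0 := by
      by_contra hne
      apply hd
      simp only [Fin.forall_fin_succ, Function.update_self, ne_eq, Fin.succ_ne_zero,
        not_false_eq_true, Function.update_of_ne]
      have : 0 + g 0 ≤ d 0 ↔ 1 + g 0 ≤ d 0 := by omega
      rw [if_congr (and_congr_left fun _ => this) rfl rfl, sub_self]
    simp only [this, Fin.cons_self_tail]
  simp only [Fin.forall_fin_succ, Function.update_self, ne_eq, Fin.succ_ne_zero,
        not_false_eq_true, Function.update_of_ne, Fin.cons_zero, Fin.cons_succ, zero_add, le_refl, true_and,
        show ¬ (1 + g 0 ≤ g 0) by omega, false_and, if_false, sub_zero, Fin.sum_univ_succ]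
  have hA := hasSum_S m x h0 h1 (fun i => f i.succ + g i.succ)
  have hB := hasSum_S m x h0 h1 (fun i => max (f i.succ + g i.succ) 1)
  split_ifs with hg0
  · rw [mul_comm, ← hA.tsum_eq]
    refine tsum_congr fun e => ?_
    have := Finset.inf'_le (Fin.cons (g 0) e : Fin (m+1) → ℕ) (Finset.mem_univ 0)
    rw [Fin.cons_zero, hg0] at this
    rw [hg0, Nat.le_zero.mp this]
    simp
  · have hg1 : g 0 = 1 := by omega
    have hC := (hA.add (hB.mul_left ((q:ℝ) - 1))).mul_left x
    refine Eq.trans ?_ (hC.tsum_eq.trans ?_)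
    swap
    · generalize ∏ i : Fin m, x ^ (f i.succ + g i.succ) = P
      generalize ∏ i : Fin m, x ^ (max (f i.succ + g i.succ) 1) = M
      ring
    refine tsum_congr fun e => ?_
    rw [hg1]
    by_cases hAe : ∀ i : Fin m, f i.succ + g i.succ ≤ e i
    · rw [if_pos hAe, if_pos hAe]
      by_cases hBe : ∀ i, 1 ≤ e i
      · rw [if_pos (fun i => max_le (hAe i) (hBe i))]
        have i1 : Finset.univ.inf' h (Fin.cons 1 e : Fin (m+1) → ℕ) = 1 := by
          refine le_antisymm (Finset.inf'_le (Fin.cons 1 e : Fin (m+1) → ℕ) (Finset.mem_univ 0)) ?_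
          refine Finset.le_inf' _ _ fun i _ => ?_
          refine Fin.cases ?_ (fun j => ?_) i
          · simp
          · simpa using hBe j
        rw [i1, Nat.add_sub_cancel_left]
        have : x * q = 1 := inv_mul_cancel₀ hq0
        linear_combination (-x ^ (∑ i, e i)) * this
      · rw [if_neg (fun hh => hBe fun i => (le_max_right _ _).trans (hh i))]
        push Not at hBe
        obtain ⟨j, hj⟩ := hBe
        have i0 := Finset.inf'_le (Fin.cons 1 e : Fin (m+1) → ℕ) (Finset.mem_univ j.succ)
        rw [Fin.cons_succ] at i0
        rw [show Finset.univ.inf' h (Fin.cons 1 e : Fin (m+1) → ℕ) = 0 by omega, Nat.sub_zero, pow_add]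
        ring
    · rw [if_neg hAe, if_neg hAe, if_neg (fun hh => hAe fun i => (le_max_left _ _).trans (hh i))]
      ring

open scoped BigOperators

/-- The key local identity `eq:a:montrer` of the paper: the difference of the local
factors `fact` at `f₁ = 0` and `f₁ = 1` equals the corresponding difference of the
local densities `dens`. -/
theorem stmt_15 (κ : Type*) [Field κ] [Fintype κ] (q : ℕ) (hq : Fintype.card κ = q)
    (n : ℕ) (hn : 2 ≤ n)
    (fact : ℕ → (Fin n → ℕ) → (Fin n → ℕ) → ℝ)
    (hfact : ∀ f₀ f g, fact f₀ f g =
      (1 - (q : ℝ)⁻¹) ^ n * (q : ℝ) ^ (-(f₀ : ℤ)) *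
        ∑' d : Fin n → ℕ,
          (if ∀ i, f i + g i ≤ d i then
            (q : ℝ) ^ (((Finset.univ.inf' ⟨⟨0, by omega⟩, Finset.mem_univ _⟩ d : ℕ) : ℤ) -
              ∑ i, (d i : ℤ))
          else 0))
    (dens : ℕ → (Fin n → ℕ) → (Fin n → ℕ) → ℝ)
    (hdens : ∀ f₀ f g, dens f₀ f g =
      (q : ℝ) ^ (-(2 * (n : ℤ))) *
        (Nat.card {p : κ × (Fin n → κ) × (Fin n → κ) //
          (f₀ = 1 → p.1 = 0) ∧ (∀ i, f i = 1 → p.2.1 i = 0) ∧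
          (∀ i, g i = 1 → p.2.2 i = 0) ∧ ∑ i, p.2.1 i * p.2.2 i = 0} : ℝ))
    (f₀ : ℕ) (hf₀ : f₀ ≤ 1) (f g : Fin n → ℕ) (hf : ∀ i, f i ≤ 1) (hg : ∀ i, g i ≤ 1) :
    fact f₀ (Function.update f ⟨0, by omega⟩ 0) g -
        fact f₀ (Function.update f ⟨0, by omega⟩ 1) g =
      dens f₀ (Function.update f ⟨0, by omega⟩ 0) g -
        dens f₀ (Function.update f ⟨0, by omega⟩ 1) g := by
  obtain ⟨m, rfl⟩ : ∃ m, n = m + 1 := ⟨n - 1, by omega⟩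
  have hz : ∀ h : 0 < m + 1, (⟨0, h⟩ : Fin (m+1)) = 0 := fun _ => rfl
  simp only [hz] at *
  have hq2 : 2 ≤ q := by rw [← hq]; exact Fintype.one_lt_card
  have hq0 : (q:ℝ) ≠ 0 := by positivity
  have hd : ∀ f : Fin (m+1) → ℕ, (∀ i, f i ≤ 1) → dens f₀ f g =
      (q : ℝ)⁻¹ ^ f₀ * (∏ i, (q : ℝ)⁻¹ ^ (f i + g i) +
      ((q : ℝ) - 1) * ∏ i, (q : ℝ)⁻¹ ^ (max (f i + g i) 1)) := by
    intro f hf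
    have := count (κ := κ) (m+1) f₀ hf₀ f g hf hg
    rw [hq] at this
    rw [hdens]
    apply Complex.ofReal_injective
    push_cast at this ⊢
    exact this
  rw [hfact, hfact, ← mul_sub, fact_diff m (by omega) q hq2 f g (hg 0) ⟨0, Finset.mem_univ _⟩,
    hd _ (fun i => ?_), hd _ (fun i => ?_)]
  · have h1 : 1 - (q:ℝ)⁻¹ ≠ 0 := by
      have : (q:ℝ)⁻¹ < 1 := inv_lt_one_of_one_lt₀ (by exact_mod_cast hq2)
      linarith
    have hc : (1 - (q:ℝ)⁻¹) ^ (m+1) * (1 - (q:ℝ)⁻¹)⁻¹ ^ m = 1 - (q:ℝ)⁻¹ := by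
      rw [pow_succ, inv_pow, mul_right_comm, mul_inv_cancel₀ (pow_ne_zero _ h1), one_mul]
    have hz' : (q:ℝ) ^ (-(f₀:ℤ)) = (q:ℝ)⁻¹ ^ f₀ := by simp
    rw [hz', mul_right_comm, ← mul_assoc, hc]
    simp only [Fin.prod_univ_succ, Function.update_self, ne_eq, Fin.succ_ne_zero,
        not_false_eq_true, Function.update_of_ne]
    generalize ∏ i : Fin m, (q:ℝ)⁻¹ ^ (f i.succ + g i.succ) = P
    generalize ∏ i : Fin m, (q:ℝ)⁻¹ ^ (max (f i.succ + g i.succ) 1) = M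
    have hg0 := hg 0
    interval_cases (g 0)
    · simp; ring
    · simp; ring
  · by_cases hi : i = 0
    · subst hi; simp
    · simpa [hi] using hf i
  · by_cases hi : i = 0
    · subst hi; simp
    · simpa [hi] using hf i
end
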